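/- arXiv:2003.02871 — 2 statements merged into one kernel-verified Lean document; each statement's English description precedes it below -/
import Mathlib

section
/- Let U ⊆ ℝ² be an open set, let μ be a finite Borel measure on U, and let C > 0 be a constant such that C ∫_U u² dμ ≤ ∫_U |∇u|² dx for every Lipschitz function u : U → ℝ with compact support in U. Then for every Lipschitz function v : U → ℝ with compact support in U and |v| ≤ 1 everywhere, one has ∫_U |v| dμ ≤ (μ(U) + 1/C) (∫_U |∇v|² dx)^{1/3}. -/
open MeasureTheory
open scoped ENNReal NNReal

/-!
By Hölder's inequality with exponent `3`, and since `|v|³ ≤ v²` when `|v| ≤ 1`,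
`∫ |v| dμ ≤ μ(U)^{2/3} (∫ v² dμ)^{1/3} ≤ μ(U)^{2/3} C^{-1/3} (∫ |∇v|² dx)^{1/3}`,
and the weighted arithmetic-geometric mean inequality bounds `μ(U)^{2/3} C^{-1/3}` by
`μ(U) + 1 / C`.
-/

section Interpolation

variable {X F : Type*} [MeasurableSpace X] [NormedAddCommGroup F] {μ : Measure X}
  [IsFiniteMeasure μ] {f : X → F} {M q : ℝ}

theorem integral_norm_le_Lp_mul_measureReal_univ_rpow
    {p p' : ℝ} (hp : p.HolderConjugate p') (hf : MemLp f (ENNReal.ofReal p) μ) :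
    ∫ x, ‖f x‖ ∂μ ≤ (∫ x, ‖f x‖ ^ p ∂μ) ^ (1 / p) * μ.real Set.univ ^ (1 / p') := by
  simpa using integral_mul_norm_le_Lp_mul_Lq hp hf.norm (memLp_const (1 : ℝ))

theorem integrable_norm_rpow_of_norm_le (hq : 0 ≤ q) (hf : AEStronglyMeasurable f μ)
    (hfM : ∀ᵐ x ∂μ, ‖f x‖ ≤ M) : Integrable (fun x => ‖f x‖ ^ q) μ := by
  refine .of_bound (hf.norm.aemeasurable.pow_const q).aestronglyMeasurable (M ^ q) ?_
  filter_upwards [hfM] with x hx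
  rw [Real.norm_of_nonneg (by positivity)]
  gcongr

theorem integral_norm_rpow_add_one_le (hq : 0 ≤ q) (hf : AEStronglyMeasurable f μ)
    (hfM : ∀ᵐ x ∂μ, ‖f x‖ ≤ M) :
    ∫ x, ‖f x‖ ^ (q + 1) ∂μ ≤ M * ∫ x, ‖f x‖ ^ q ∂μ := by
  rw [← integral_const_mul]
  refine integral_mono_ae (integrable_norm_rpow_of_norm_le (by positivity) hf hfM)
    ((integrable_norm_rpow_of_norm_le hq hf hfM).const_mul M) ?_
  filter_upwards [hfM] with x hx
  rw [Real.rpow_add_one' (norm_nonneg _) (by positivity), mul_comm]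
  gcongr

theorem integral_norm_le_rpow_mul_of_norm_le (hq : 0 < q)
    (hf : AEStronglyMeasurable f μ) (hfM : ∀ᵐ x ∂μ, ‖f x‖ ≤ M) :
    ∫ x, ‖f x‖ ∂μ ≤
      (M * ∫ x, ‖f x‖ ^ q ∂μ) ^ (1 / (q + 1)) * μ.real Set.univ ^ (q / (q + 1)) := by
  have hconj : (q + 1).HolderConjugate ((q + 1) / q) := by
    rw [Real.holderConjugate_iff_eq_conjExponent (by linarith), add_sub_cancel_right]
  calc ∫ x, ‖f x‖ ∂μ
      ≤ (∫ x, ‖f x‖ ^ (q + 1) ∂μ) ^ (1 / (q + 1)) *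
          μ.real Set.univ ^ (1 / ((q + 1) / q)) :=
        integral_norm_le_Lp_mul_measureReal_univ_rpow hconj
          (.of_bound hf M hfM)
    _ ≤ (M * ∫ x, ‖f x‖ ^ q ∂μ) ^ (1 / (q + 1)) * μ.real Set.univ ^ (q / (q + 1)) := by
        rw [one_div_div]
        gcongr
        exact integral_norm_rpow_add_one_le hq.le hf hfM

end Interpolation

theorem rpow_mul_rpow_le_add {a b r s : ℝ} (ha : 0 ≤ a) (hb : 0 ≤ b) (hr : 0 ≤ r)
    (hs : 0 ≤ s) (hrs : r + s = 1) : a ^ r * b ^ s ≤ a + b :=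
  calc a ^ r * b ^ s
      ≤ r * a + s * b := Real.geom_mean_le_arith_mean2_weighted hr hs ha hb hrs
    _ ≤ a + b := add_le_add (mul_le_of_le_one_left ha (by linarith))
        (mul_le_of_le_one_left hb (by linarith))

theorem statement4_general {X F : Type*} [MeasurableSpace X] [NormedAddCommGroup F]
    (μ : Measure X) [IsFiniteMeasure μ] {C M q energy : ℝ} (hC : 0 < C) (hM : 0 ≤ M)
    (hq : 0 < q) {f : X → F} (hf : AEStronglyMeasurable f μ) (hfM : ∀ᵐ x ∂μ, ‖f x‖ ≤ M)
    (henergy : C * ∫ x, ‖f x‖ ^ q ∂μ ≤ energy) :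
    ∫ x, ‖f x‖ ∂μ ≤ (μ.real Set.univ + M / C) * energy ^ (1 / (q + 1)) := by
  have henergy₀ : 0 ≤ energy := le_trans (by positivity) henergy
  calc ∫ x, ‖f x‖ ∂μ
      ≤ (M * ∫ x, ‖f x‖ ^ q ∂μ) ^ (1 / (q + 1)) * μ.real Set.univ ^ (q / (q + 1)) :=
        integral_norm_le_rpow_mul_of_norm_le hq hf hfM
    _ ≤ (M * (energy / C)) ^ (1 / (q + 1)) * μ.real Set.univ ^ (q / (q + 1)) := by
        gcongr
        exact (le_div_iff₀' hC).mpr henergy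
    _ = μ.real Set.univ ^ (q / (q + 1)) * (M / C) ^ (1 / (q + 1)) *
          energy ^ (1 / (q + 1)) := by
        rw [mul_div_left_comm, mul_comm energy, Real.mul_rpow (by positivity) henergy₀]
        ring
    _ ≤ (μ.real Set.univ + M / C) * energy ^ (1 / (q + 1)) := by
        gcongr
        exact rpow_mul_rpow_le_add (by positivity) (by positivity) (by positivity)
          (by positivity) (by field_simp)

/-- If the finite Borel measure `μ` on the open set `U ⊆ ℝ²` has
first Dirichlet eigenvalue at least `C > 0` (tested on compactly supported Lipschitz
functions), then every compactly supported Lipschitz `v` with `|v| ≤ 1` satisfies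
`∫ |v| dμ ≤ (μ(U) + 1/C) (∫ |∇v|² dx)^{1/3}`. -/
theorem statement4 (U : Set (EuclideanSpace ℝ (Fin 2))) (hU : IsOpen U)
    (μ : Measure (EuclideanSpace ℝ (Fin 2))) [IsFiniteMeasure μ] (hμsupp : μ Uᶜ = 0)
    (C : ℝ) (hC : 0 < C)
    (heig : ∀ (u : EuclideanSpace ℝ (Fin 2) → ℝ) (K : ℝ≥0), LipschitzWith K u →
      HasCompactSupport u → tsupport u ⊆ U →
      C * ∫ x in U, (u x) ^ 2 ∂μ ≤ ∫ x in U, ‖fderiv ℝ u x‖ ^ 2)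
    (v : EuclideanSpace ℝ (Fin 2) → ℝ) (K : ℝ≥0) (hv : LipschitzWith K v)
    (hvcs : HasCompactSupport v) (hvU : tsupport v ⊆ U) (hvb : ∀ x, |v x| ≤ 1) :
    ∫ x in U, |v x| ∂μ ≤
      ((μ U).toReal + 1 / C) * (∫ x in U, ‖fderiv ℝ v x‖ ^ 2) ^ ((1 : ℝ) / 3) := by
  have henergy : C * ∫ x in U, ‖v x‖ ^ (2 : ℝ) ∂μ ≤ ∫ x in U, ‖fderiv ℝ v x‖ ^ 2 := by
    simpa using heig v K hv hvcs hvU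
  simpa [Measure.real, two_add_one_eq_three] using statement4_general (μ.restrict U) hC
    zero_le_one two_pos hv.continuous.aestronglyMeasurable (.of_forall hvb) henergy
end

section
/- Let A = {z ∈ ℝ² : 1 < |z| < 4} be the open annulus and let u : A → ℝ be harmonic on A with ∫_A |∇u|² dz < ∞. Suppose that for every ρ ∈ (1, 4) there exists a point z_ρ with |z_ρ| = ρ and u(z_ρ) = 0. Then for every x ∈ ℝ² with |x| = 2 one has u(x)² ≤ 64π ∫_A |∇u|² dz. -/
open MeasureTheory

/-- The Laplacian of a function on the plane, as the sum of its second partial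
derivatives in the coordinate directions. -/
noncomputable def planeLaplacian (u : EuclideanSpace ℝ (Fin 2) → ℝ)
    (x : EuclideanSpace ℝ (Fin 2)) : ℝ :=
  ∑ i : Fin 2,
    fderiv ℝ (fun y => fderiv ℝ u y (EuclideanSpace.single i 1)) x (EuclideanSpace.single i 1)

/-! The complex gradient `∂₁u - i ∂₂u` of a harmonic function is holomorphic, hence so is its
square, whose modulus is `|∇u|²`. The mean value property of this square over a disc of radius `δ`
bounds `|∇u|²` at the centre by `(π δ²)⁻¹ ∫ |∇u|²`. Two points of a circle of radius `r` are joined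
by an arc of length at most `π r`, so integrating the gradient bound along that arc gives
`(u x - u y)² ≤ (r / δ)² π ∫ |∇u|²` as soon as all discs of radius `δ` about points of the circle
lie in the domain. With `r = 2`, `δ = 1` and `y` a zero of `u`, the constant is `4π`. -/

section

open Metric Set InnerProductSpace
open scoped Real ENNReal Laplacian

section MeanValue

theorem lintegral_ball_eq_lintegral_circleMap (g : ℂ → ℝ≥0∞) (c : ℂ) (R : ℝ) :
    ∫⁻ z in ball c R, g z =
      ∫⁻ p in Ioo 0 R ×ˢ Ioo (-π) π, ENNReal.ofReal p.1 * g (circleMap c p.1 p.2) := by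
  have polar_eq (p : ℝ × ℝ) : c + Complex.polarCoord.symm p = circleMap c p.1 p.2 := by
    simp [circleMap, Complex.exp_mul_I]
  have mem_iff {p : ℝ × ℝ} (hp : p ∈ polarCoord.target) :
      circleMap c p.1 p.2 ∈ ball c R ↔ p ∈ Ioo 0 R ×ˢ Ioo (-π) π := by
    obtain ⟨hr, hθ⟩ := hp
    simp_all [dist_eq_norm, circleMap_sub_center, abs_of_pos]
  have subset : Ioo 0 R ×ˢ Ioo (-π) π ⊆ polarCoord.target :=
    prod_mono Ioo_subset_Ioi_self subset_rfl
  have meas : MeasurableSet (Ioo 0 R ×ˢ Ioo (-π) π) := measurableSet_Ioo.prod measurableSet_Ioo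
  rw [← lintegral_indicator measurableSet_ball, ← lintegral_add_left_eq_self _ c,
    ← Complex.lintegral_comp_polarCoord_symm, ← inter_eq_self_of_subset_left subset,
    ← setLIntegral_indicator meas]
  refine setLIntegral_congr_fun polarCoord.open_target.measurableSet fun p hp ↦ ?_
  by_cases hR : p ∈ Ioo 0 R ×ˢ Ioo (-π) π
  · simp only [polar_eq, indicator_of_mem ((mem_iff hp).2 hR), indicator_of_mem hR, smul_eq_mul]
  · simp only [polar_eq, indicator_of_notMem (mt (mem_iff hp).1 hR), indicator_of_notMem hR,
      smul_zero]

theorem lintegral_ball_eq_lintegral_lintegral_circleMap {g : ℂ → ℝ≥0∞} {c : ℂ} {R : ℝ}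
    (hg : ContinuousOn g (ball c R)) :
    ∫⁻ z in ball c R, g z =
      ∫⁻ r in Ioo 0 R, ENNReal.ofReal r * ∫⁻ θ in Ioo (-π) π, g (circleMap c r θ) := by
  have maps : MapsTo (fun p : ℝ × ℝ ↦ circleMap c p.1 p.2) (Ioo 0 R ×ˢ Ioo (-π) π) (ball c R) := by
    rintro p ⟨hr, -⟩
    simpa [dist_eq_norm, circleMap_sub_center, abs_of_pos hr.1] using hr.2
  have cont : Continuous fun p : ℝ × ℝ ↦ circleMap c p.1 p.2 := by
    unfold circleMap
    fun_prop
  have meas : AEMeasurable (fun p : ℝ × ℝ ↦ ENNReal.ofReal p.1 * g (circleMap c p.1 p.2))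
      ((volume.restrict (Ioo 0 R)).prod (volume.restrict (Ioo (-π) π))) := by
    rw [Measure.prod_restrict]
    exact (by fun_prop : Measurable fun p : ℝ × ℝ ↦ ENNReal.ofReal p.1).aemeasurable.mul
      ((hg.comp cont.continuousOn maps).aemeasurable (measurableSet_Ioo.prod measurableSet_Ioo))
  rw [lintegral_ball_eq_lintegral_circleMap, Measure.volume_eq_prod, ← Measure.prod_restrict,
    lintegral_prod _ meas]
  simp only [lintegral_const_mul' _ _ ENNReal.ofReal_ne_top]

theorem lintegral_ball_mono_of_lintegral_circleMap_le {g h : ℂ → ℝ≥0∞} {c : ℂ} {R : ℝ}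
    (hg : ContinuousOn g (ball c R)) (hh : ContinuousOn h (ball c R))
    (hle : ∀ r ∈ Ioo 0 R, ∫⁻ θ in Ioo (-π) π, g (circleMap c r θ) ≤
      ∫⁻ θ in Ioo (-π) π, h (circleMap c r θ)) :
    ∫⁻ z in ball c R, g z ≤ ∫⁻ z in ball c R, h z := by
  rw [lintegral_ball_eq_lintegral_lintegral_circleMap hg,
    lintegral_ball_eq_lintegral_lintegral_circleMap hh]
  exact setLIntegral_mono' measurableSet_Ioo fun r hr ↦ mul_le_mul_right (hle r hr) _

theorem ofReal_two_pi_mul_enorm_circleAverage_le {E : Type*} [NormedAddCommGroup E]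
    [NormedSpace ℝ E] (f : ℂ → E) (c : ℂ) (r : ℝ) :
    ENNReal.ofReal (2 * π) * ‖Real.circleAverage f c r‖ₑ ≤
      ∫⁻ θ in Ioo (-π) π, ‖f (circleMap c r θ)‖ₑ := by
  have integral_eq : (2 * π) • Real.circleAverage f c r =
      ∫ θ in Ioo (-π) π, f (circleMap c r θ) := by
    rw [Real.circleAverage_eq_integral_add (-π),
      intervalIntegral.integral_comp_add_right (fun θ ↦ f (circleMap c r θ)),
      smul_inv_smul₀ Real.two_pi_pos.ne', zero_add, show 2 * π + -π = π by ring,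
      intervalIntegral.integral_of_le (by linarith [Real.pi_pos]), integral_Ioc_eq_integral_Ioo]
  calc ENNReal.ofReal (2 * π) * ‖Real.circleAverage f c r‖ₑ
      = ‖∫ θ in Ioo (-π) π, f (circleMap c r θ)‖ₑ := by
        rw [← integral_eq, enorm_smul, Real.enorm_of_nonneg Real.two_pi_pos.le]
    _ ≤ ∫⁻ θ in Ioo (-π) π, ‖f (circleMap c r θ)‖ₑ := enorm_integral_le_lintegral_enorm _

theorem volume_ball_mul_enorm_le_lintegral_enorm {E : Type*} [NormedAddCommGroup E]
    [NormedSpace ℂ E] [CompleteSpace E] {f : ℂ → E} {c : ℂ} {R : ℝ}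
    (hf : DifferentiableOn ℂ f (ball c R)) :
    volume (ball c R) * ‖f c‖ₑ ≤ ∫⁻ z in ball c R, ‖f z‖ₑ := by
  rw [mul_comm, ← setLIntegral_const]
  refine lintegral_ball_mono_of_lintegral_circleMap_le continuousOn_const hf.continuousOn.enorm
    fun r ⟨hr, hrR⟩ ↦ ?_
  have average : Real.circleAverage f c r = f c :=
    (hf.diffContOnCl_ball (closedBall_subset_ball (by rwa [abs_of_pos hr]))).circleAverage
  calc ∫⁻ _ in Ioo (-π) π, ‖f c‖ₑ
      = ENNReal.ofReal (2 * π) * ‖Real.circleAverage f c r‖ₑ := by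
        rw [setLIntegral_const, Real.volume_Ioo, average, mul_comm, sub_neg_eq_add, two_mul]
    _ ≤ ∫⁻ θ in Ioo (-π) π, ‖f (circleMap c r θ)‖ₑ := ofReal_two_pi_mul_enorm_circleAverage_le f c r

end MeanValue

section Harmonic

theorem norm_apply_one_sub_I_mul_apply_I (L : ℂ →L[ℝ] ℝ) :
    ‖(L 1 : ℂ) - Complex.I * (L Complex.I : ℂ)‖ = ‖L‖ := by
  have conj_eq : (starRingEnd ℂ) ((toDual ℝ ℂ).symm L) =
      (L 1 : ℂ) - Complex.I * (L Complex.I : ℂ) := by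
    rw [← toDual_symm_apply (𝕜 := ℝ) (x := 1), ← toDual_symm_apply (𝕜 := ℝ) (x := Complex.I)]
    apply Complex.ext <;> simp [-toDual_symm_apply, Complex.inner]
  rw [← conj_eq, RCLike.norm_conj, LinearIsometryEquiv.norm_map]

theorem volume_ball_mul_enorm_fderiv_sq_le {v : ℂ → ℝ} {c : ℂ} {R : ℝ}
    (hv : HarmonicOnNhd v (ball c R)) :
    volume (ball c R) * ‖fderiv ℝ v c‖ₑ ^ 2 ≤ ∫⁻ z in ball c R, ‖fderiv ℝ v z‖ₑ ^ 2 := by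
  have holomorphic : DifferentiableOn ℂ
      (fun z ↦ ((fderiv ℝ v z 1 : ℂ) - Complex.I * (fderiv ℝ v z Complex.I : ℂ)) ^ 2)
      (ball c R) := fun z hz ↦
    ((HarmonicAt.differentiableAt_complex_partial (hv z hz)).pow 2).differentiableWithinAt
  have enorm_eq (z : ℂ) :
      ‖((fderiv ℝ v z 1 : ℂ) - Complex.I * (fderiv ℝ v z Complex.I : ℂ)) ^ 2‖ₑ =
        ‖fderiv ℝ v z‖ₑ ^ 2 := by
    rw [enorm_pow, ← ofReal_norm, norm_apply_one_sub_I_mul_apply_I, ofReal_norm]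
  simpa only [enorm_eq] using volume_ball_mul_enorm_le_lintegral_enorm holomorphic

theorem norm_fderiv_sq_le_setIntegral {v : ℂ → ℝ} {U : Set ℂ} {c : ℂ} {R : ℝ} (hR : 0 < R)
    (hU : ball c R ⊆ U) (hv : HarmonicOnNhd v U)
    (hint : IntegrableOn (fun z ↦ ‖fderiv ℝ v z‖ ^ 2) U) :
    ‖fderiv ℝ v c‖ ^ 2 ≤ (∫ z in U, ‖fderiv ℝ v z‖ ^ 2) / (π * R ^ 2) := by
  have ofReal_sq (z : ℂ) : ‖fderiv ℝ v z‖ₑ ^ 2 = ENNReal.ofReal (‖fderiv ℝ v z‖ ^ 2) := by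
    rw [← ofReal_norm, ENNReal.ofReal_pow (norm_nonneg _)]
  have volume_eq : volume (ball c R) = ENNReal.ofReal (π * R ^ 2) := by
    rw [Complex.volume_ball, ENNReal.ofReal_mul Real.pi_pos.le, ENNReal.ofReal_pow hR.le, mul_comm,
      ← NNReal.coe_real_pi, ENNReal.ofReal_coe_nnreal]
  have energy_le : ENNReal.ofReal (π * R ^ 2 * ‖fderiv ℝ v c‖ ^ 2) ≤
      ENNReal.ofReal (∫ z in U, ‖fderiv ℝ v z‖ ^ 2) := by
    rw [ofReal_integral_eq_lintegral_ofReal hint (.of_forall fun z ↦ by positivity),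
      ENNReal.ofReal_mul (by positivity), ← volume_eq]
    simpa only [ofReal_sq] using
      (volume_ball_mul_enorm_fderiv_sq_le (hv.mono hU)).trans (lintegral_mono_set hU)
  rw [le_div_iff₀' (by positivity)]
  exact (ENNReal.ofReal_le_ofReal_iff (integral_nonneg fun z ↦ by positivity)).1 energy_le

end Harmonic

section Circle

theorem exists_circleMap_eq_and_abs_sub_le_pi {c x y : ℂ} {r : ℝ} (hx : x ∈ sphere c r)
    (hy : y ∈ sphere c r) :
    ∃ α β : ℝ, circleMap c r α = x ∧ circleMap c r β = y ∧ |α - β| ≤ π := by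
  rw [mem_sphere_iff_norm] at hx hy
  have hy_polar : (r : ℂ) * Complex.exp ((y - c).arg * Complex.I) = y - c := by
    rw [← hy, Complex.norm_mul_exp_arg_mul_I]
  refine ⟨(y - c).arg + ((x - c) / (y - c)).arg, (y - c).arg, ?_, ?_, ?_⟩
  · have hx_polar : (y - c) * Complex.exp (((x - c) / (y - c)).arg * Complex.I) = x - c := by
      rcases eq_or_ne r 0 with rfl | hr
      · rw [norm_eq_zero.1 hx, norm_eq_zero.1 hy, zero_mul]
      · have hyc : y - c ≠ 0 := norm_ne_zero_iff.1 (hy ▸ hr)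
        have hq := Complex.norm_mul_exp_arg_mul_I ((x - c) / (y - c))
        rw [norm_div, hx, hy, div_self hr, Complex.ofReal_one, one_mul] at hq
        rw [hq, mul_div_cancel₀ _ hyc]
    rw [circleMap, Complex.ofReal_add, add_mul, Complex.exp_add, ← mul_assoc, hy_polar, hx_polar,
      add_sub_cancel]
  · rw [circleMap, hy_polar, add_sub_cancel]
  · simpa only [add_sub_cancel_left] using Complex.abs_arg_le_pi _

theorem norm_sub_le_of_norm_fderiv_le_on_sphere {E : Type*} [NormedAddCommGroup E]
    [NormedSpace ℝ E] {f : ℂ → E} {c x y : ℂ} {r M : ℝ}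
    (hf : ∀ z ∈ sphere c r, DifferentiableAt ℝ f z) (hM : ∀ z ∈ sphere c r, ‖fderiv ℝ f z‖ ≤ M)
    (hx : x ∈ sphere c r) (hy : y ∈ sphere c r) :
    ‖f x - f y‖ ≤ M * r * π := by
  have hr : 0 ≤ r := nonneg_of_mem_sphere hx
  have hM0 : 0 ≤ M := (norm_nonneg _).trans (hM x hx)
  obtain ⟨α, β, rfl, rfl, hαβ⟩ := exists_circleMap_eq_and_abs_sub_le_pi hx hy
  have hderiv (θ : ℝ) : HasDerivAt (fun t ↦ f (circleMap c r t))
      (fderiv ℝ f (circleMap c r θ) (circleMap 0 r θ * Complex.I)) θ :=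
    (hf _ (circleMap_mem_sphere c hr θ)).hasFDerivAt.comp_hasDerivAt θ (hasDerivAt_circleMap c r θ)
  have hderiv_le (θ : ℝ) : ‖fderiv ℝ f (circleMap c r θ) (circleMap 0 r θ * Complex.I)‖ ≤ M * r :=
    calc ‖fderiv ℝ f (circleMap c r θ) (circleMap 0 r θ * Complex.I)‖
        ≤ ‖fderiv ℝ f (circleMap c r θ)‖ * ‖circleMap 0 r θ * Complex.I‖ :=
          ContinuousLinearMap.le_opNorm _ _
      _ = ‖fderiv ℝ f (circleMap c r θ)‖ * r := by
          rw [norm_mul, Complex.norm_I, mul_one, norm_circleMap_zero, abs_of_nonneg hr]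
      _ ≤ M * r := by gcongr; exact hM _ (circleMap_mem_sphere c hr θ)
  calc ‖f (circleMap c r α) - f (circleMap c r β)‖
      ≤ M * r * ‖α - β‖ :=
        convex_univ.norm_image_sub_le_of_norm_hasDerivWithin_le
          (fun θ _ ↦ (hderiv θ).hasDerivWithinAt) (fun θ _ ↦ hderiv_le θ) (mem_univ β) (mem_univ α)
    _ ≤ M * r * π := by gcongr; exact hαβ

theorem sq_sub_le_setIntegral_norm_fderiv_sq {v : ℂ → ℝ} {U : Set ℂ} {c x y : ℂ} {r δ : ℝ}
    (hδ : 0 < δ) (hU : ∀ z ∈ sphere c r, ball z δ ⊆ U) (hv : HarmonicOnNhd v U)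
    (hint : IntegrableOn (fun z ↦ ‖fderiv ℝ v z‖ ^ 2) U)
    (hx : x ∈ sphere c r) (hy : y ∈ sphere c r) :
    (v x - v y) ^ 2 ≤ (r / δ) ^ 2 * π * ∫ z in U, ‖fderiv ℝ v z‖ ^ 2 := by
  set E := ∫ z in U, ‖fderiv ℝ v z‖ ^ 2
  have : 0 ≤ E := integral_nonneg fun z ↦ by positivity
  have differentiable (z : ℂ) (hz : z ∈ sphere c r) : DifferentiableAt ℝ v z :=
    (hv z (hU z hz (mem_ball_self hδ))).1.differentiableAt two_ne_zero
  have gradient_le (z : ℂ) (hz : z ∈ sphere c r) : ‖fderiv ℝ v z‖ ≤ √(E / (π * δ ^ 2)) :=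
    Real.le_sqrt_of_sq_le (norm_fderiv_sq_le_setIntegral hδ (hU z hz) hv hint)
  calc (v x - v y) ^ 2
      = ‖v x - v y‖ ^ 2 := by rw [Real.norm_eq_abs, sq_abs]
    _ ≤ (√(E / (π * δ ^ 2)) * r * π) ^ 2 := by
        gcongr
        exact norm_sub_le_of_norm_fderiv_le_on_sphere differentiable gradient_le hx hy
    _ = (r / δ) ^ 2 * π * E := by
        rw [mul_pow, mul_pow, Real.sq_sqrt (by positivity)]
        field_simp

end Circle

section LinearIsometryEquiv

theorem norm_fderiv_comp_linearIsometryEquiv {𝕜 E E' F : Type*} [NontriviallyNormedField 𝕜]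
    [NormedAddCommGroup E] [NormedSpace 𝕜 E] [NormedAddCommGroup E'] [NormedSpace 𝕜 E']
    [NormedAddCommGroup F] [NormedSpace 𝕜 F] (e : E ≃ₗᵢ[𝕜] E') (f : E' → F) (x : E) :
    ‖fderiv 𝕜 (f ∘ e) x‖ = ‖fderiv 𝕜 f (e x)‖ := by
  simpa only [norm_iteratedFDeriv_one] using e.norm_iteratedFDeriv_comp_right f x 1

variable {E E' F : Type*} [NormedAddCommGroup E] [InnerProductSpace ℝ E] [FiniteDimensional ℝ E]
  [NormedAddCommGroup E'] [InnerProductSpace ℝ E'] [FiniteDimensional ℝ E']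
  [NormedAddCommGroup F] [NormedSpace ℝ F]

theorem laplacian_comp_linearIsometryEquiv (e : E ≃ₗᵢ[ℝ] E') (f : E' → F) (x : E) :
    Δ (f ∘ e) x = Δ f (e x) := by
  let b := stdOrthonormalBasis ℝ E
  have hcomp : iteratedFDeriv ℝ 2 (f ∘ e) x =
      (iteratedFDeriv ℝ 2 f (e x)).compContinuousLinearMap
        fun _ ↦ (e.toContinuousLinearEquiv : E →L[ℝ] E') := by
    simpa only [preimage_univ, iteratedFDerivWithin_univ, e.coe_toContinuousLinearEquiv] using
      e.toContinuousLinearEquiv.iteratedFDerivWithin_comp_right f uniqueDiffOn_univ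
        (mem_univ (e x)) 2
  rw [laplacian_eq_iteratedFDeriv_orthonormalBasis _ b,
    laplacian_eq_iteratedFDeriv_orthonormalBasis f (b.map e)]
  refine Finset.sum_congr rfl fun i _ ↦ ?_
  rw [hcomp, ContinuousMultilinearMap.compContinuousLinearMap_apply]
  congr 1
  ext j
  fin_cases j <;> simp

theorem harmonicOnNhd_comp_linearIsometryEquiv (e : E ≃ₗᵢ[ℝ] E') {f : E' → F} {s : Set E'}
    (hf : HarmonicOnNhd f s) : HarmonicOnNhd (f ∘ e) (e ⁻¹' s) := by
  refine fun x hx ↦ ⟨(hf (e x) hx).1.comp x e.contDiff.contDiffAt, ?_⟩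
  filter_upwards [e.continuous.continuousAt.eventually (hf (e x) hx).2] with y hy
  rw [laplacian_comp_linearIsometryEquiv, hy, Pi.zero_apply, Pi.zero_apply]

end LinearIsometryEquiv

section Plane

theorem planeLaplacian_eq_laplacian {u : EuclideanSpace ℝ (Fin 2) → ℝ}
    {x : EuclideanSpace ℝ (Fin 2)} (hu : ContDiffAt ℝ 2 u x) : planeLaplacian u x = Δ u x := by
  have hd : DifferentiableAt ℝ (fderiv ℝ u) x :=
    (hu.fderiv_right (m := 1) (by norm_num)).differentiableAt one_ne_zero
  rw [laplacian_eq_iteratedFDeriv_orthonormalBasis u (EuclideanSpace.basisFun (Fin 2) ℝ),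
    planeLaplacian]
  refine Finset.sum_congr rfl fun i _ ↦ ?_
  rw [iteratedFDeriv_two_apply, fderiv_clm_apply hd (by fun_prop)]
  simp

theorem harmonicOnNhd_of_planeLaplacian_eq_zero {u : EuclideanSpace ℝ (Fin 2) → ℝ}
    {U : Set (EuclideanSpace ℝ (Fin 2))} (hU : IsOpen U) (hu : ContDiffOn ℝ 2 u U)
    (hharm : ∀ z ∈ U, planeLaplacian u z = 0) : HarmonicOnNhd u U := by
  refine fun x hx ↦ ⟨hu.contDiffAt (hU.mem_nhds hx), ?_⟩
  filter_upwards [hU.mem_nhds hx] with y hy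
  rw [← planeLaplacian_eq_laplacian (hu.contDiffAt (hU.mem_nhds hy)), hharm y hy, Pi.zero_apply]

theorem sq_sub_le_setIntegral_of_planeLaplacian_eq_zero {u : EuclideanSpace ℝ (Fin 2) → ℝ}
    {U : Set (EuclideanSpace ℝ (Fin 2))} (hU : IsOpen U) (hu : ContDiffOn ℝ 2 u U)
    (hharm : ∀ z ∈ U, planeLaplacian u z = 0)
    (hgrad : IntegrableOn (fun z ↦ ‖fderiv ℝ u z‖ ^ 2) U)
    {c : EuclideanSpace ℝ (Fin 2)} {r δ : ℝ} (hδ : 0 < δ)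
    (hball : ∀ z ∈ sphere c r, ball z δ ⊆ U) {x y : EuclideanSpace ℝ (Fin 2)}
    (hx : x ∈ sphere c r) (hy : y ∈ sphere c r) :
    (u x - u y) ^ 2 ≤ (r / δ) ^ 2 * π * ∫ z in U, ‖fderiv ℝ u z‖ ^ 2 := by
  let e := Complex.orthonormalBasisOneI.repr
  have he : MeasurableEmbedding e := e.toHomeomorph.measurableEmbedding
  have hharm_comp : HarmonicOnNhd (u ∘ e) (e ⁻¹' U) :=
    harmonicOnNhd_comp_linearIsometryEquiv e (harmonicOnNhd_of_planeLaplacian_eq_zero hU hu hharm)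
  have hgrad_comp : IntegrableOn (fun z ↦ ‖fderiv ℝ (u ∘ e) z‖ ^ 2) (e ⁻¹' U) := by
    simp only [norm_fderiv_comp_linearIsometryEquiv]
    exact (e.measurePreserving.integrableOn_comp_preimage he).2 hgrad
  have henergy : ∫ z in e ⁻¹' U, ‖fderiv ℝ (u ∘ e) z‖ ^ 2 = ∫ z in U, ‖fderiv ℝ u z‖ ^ 2 := by
    simp only [norm_fderiv_comp_linearIsometryEquiv]
    exact e.measurePreserving.setIntegral_preimage_emb he (fun z ↦ ‖fderiv ℝ u z‖ ^ 2) U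
  have hball_comp : ∀ z ∈ sphere (e.symm c) r, ball z δ ⊆ e ⁻¹' U := by
    intro z hz
    rw [← e.symm.image_sphere] at hz
    obtain ⟨w, hw, rfl⟩ := hz
    rw [← e.preimage_ball w δ]
    exact Set.preimage_mono (hball w hw)
  have hsphere {w} (hw : w ∈ sphere c r) : e.symm w ∈ sphere (e.symm c) r := by
    rwa [mem_sphere, e.symm.dist_map]
  simpa only [Function.comp_apply, e.apply_symm_apply, henergy] using
    sq_sub_le_setIntegral_norm_fderiv_sq hδ hball_comp hharm_comp hgrad_comp (hsphere hx)
      (hsphere hy)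

end Plane

section Annulus

variable {E : Type*} [SeminormedAddCommGroup E]

theorem isOpen_setOf_lt_norm_and_norm_lt (a b : ℝ) : IsOpen {z : E | a < ‖z‖ ∧ ‖z‖ < b} :=
  (isOpen_lt continuous_const continuous_norm).inter (isOpen_lt continuous_norm continuous_const)

theorem ball_subset_setOf_lt_norm_and_norm_lt {a b δ : ℝ} {z : E} (ha : a + δ ≤ ‖z‖)
    (hb : ‖z‖ + δ ≤ b) : ball z δ ⊆ {w : E | a < ‖w‖ ∧ ‖w‖ < b} := by
  intro w hw
  have hdist := abs_le.1 (abs_norm_sub_norm_le w z)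
  rw [mem_ball_iff_norm] at hw
  constructor <;> linarith [hdist.1, hdist.2]

end Annulus

end

theorem statement12_general {u : EuclideanSpace ℝ (Fin 2) → ℝ} {a b r δ : ℝ}
    (hu : ContDiffOn ℝ 2 u {z : EuclideanSpace ℝ (Fin 2) | a < ‖z‖ ∧ ‖z‖ < b})
    (hharm : ∀ z ∈ {z : EuclideanSpace ℝ (Fin 2) | a < ‖z‖ ∧ ‖z‖ < b}, planeLaplacian u z = 0)
    (hgrad : IntegrableOn (fun z => ‖fderiv ℝ u z‖ ^ 2)
      {z : EuclideanSpace ℝ (Fin 2) | a < ‖z‖ ∧ ‖z‖ < b})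
    (hδ : 0 < δ) (ha : a + δ ≤ r) (hb : r + δ ≤ b)
    (hzero : ∃ z : EuclideanSpace ℝ (Fin 2), ‖z‖ = r ∧ u z = 0)
    {x : EuclideanSpace ℝ (Fin 2)} (hx : ‖x‖ = r) :
    (u x) ^ 2 ≤ (r / δ) ^ 2 * Real.pi *
      ∫ z in {z : EuclideanSpace ℝ (Fin 2) | a < ‖z‖ ∧ ‖z‖ < b}, ‖fderiv ℝ u z‖ ^ 2 := by
  obtain ⟨w, hw, hw0⟩ := hzero
  have hball : ∀ z ∈ Metric.sphere (0 : EuclideanSpace ℝ (Fin 2)) r,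
      Metric.ball z δ ⊆ {z | a < ‖z‖ ∧ ‖z‖ < b} := fun z hz => by
    rw [mem_sphere_zero_iff_norm] at hz
    exact ball_subset_setOf_lt_norm_and_norm_lt (hz ▸ ha) (hz ▸ hb)
  simpa only [hw0, sub_zero] using
    sq_sub_le_setIntegral_of_planeLaplacian_eq_zero (isOpen_setOf_lt_norm_and_norm_lt a b) hu hharm
      hgrad hδ hball (mem_sphere_zero_iff_norm.2 hx) (mem_sphere_zero_iff_norm.2 hw)

/-- A harmonic function of finite Dirichlet energy on the annulus
`1 < |z| < 4` which vanishes somewhere on every concentric circle satisfies the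
pointwise bound `u(x)² ≤ 64π ∫_A |∇u|²` on the middle circle `|x| = 2`. -/
theorem statement12 (u : EuclideanSpace ℝ (Fin 2) → ℝ)
    (hu : ContDiffOn ℝ 2 u {z : EuclideanSpace ℝ (Fin 2) | 1 < ‖z‖ ∧ ‖z‖ < 4})
    (hharm : ∀ z ∈ {z : EuclideanSpace ℝ (Fin 2) | 1 < ‖z‖ ∧ ‖z‖ < 4}, planeLaplacian u z = 0)
    (hgrad : IntegrableOn (fun z => ‖fderiv ℝ u z‖ ^ 2)
      {z : EuclideanSpace ℝ (Fin 2) | 1 < ‖z‖ ∧ ‖z‖ < 4})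
    (hzero : ∀ ρ ∈ Set.Ioo (1 : ℝ) 4, ∃ z : EuclideanSpace ℝ (Fin 2), ‖z‖ = ρ ∧ u z = 0) :
    ∀ x : EuclideanSpace ℝ (Fin 2), ‖x‖ = 2 →
      (u x) ^ 2 ≤ 64 * Real.pi *
        ∫ z in {z : EuclideanSpace ℝ (Fin 2) | 1 < ‖z‖ ∧ ‖z‖ < 4}, ‖fderiv ℝ u z‖ ^ 2 := by
  intro x hx
  refine (statement12_general hu hharm hgrad one_pos (by norm_num) (by norm_num)
    (hzero 2 (by norm_num)) hx).trans ?_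
  gcongr
  norm_num
end
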